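/- Let q ∈ (1,2], let p = q/(q−1) be its Hölder conjugate, and let α > 0. Define the probability measure ν on ℝ³ by dν = Z⁻¹ e^{−α N^p} dx, where N is the Kaplan norm and Z = ∫_{ℝ³} e^{−α N^p} dx ∈ (0,∞). Then there exists a constant C ∈ (0,∞) such that for every locally Lipschitz f : ℝ³ → ℝ with ∫ |∇f|^q dν < ∞ one has ∫ |f − ∫ f dν|^q dν ≤ C ∫ |∇f|^q dν (the q-spectral gap inequality). -/

import Mathlib

open MeasureTheory Filter
open scoped ENNReal

noncomputable section

/-- The underlying space `ℝ³` of the Heisenberg group. -/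
abbrev Spin3 : Type := Fin 3 → ℝ

/-- The Heisenberg vector field `X¹ = ∂₁ + 2x₂∂₃` applied to `f` at `x`. -/
def X1 (f : Spin3 → ℝ) (x : Spin3) : ℝ :=
  fderiv ℝ f x (Pi.single 0 1) + 2 * x 1 * fderiv ℝ f x (Pi.single 2 1)

/-- The Heisenberg vector field `X² = ∂₂ − 2x₁∂₃` applied to `f` at `x`. -/
def X2 (f : Spin3 → ℝ) (x : Spin3) : ℝ :=
  fderiv ℝ f x (Pi.single 1 1) - 2 * x 0 * fderiv ℝ f x (Pi.single 2 1)

/-- The length `|∇f|` of the Heisenberg sub-gradient `∇f = (X¹f, X²f)`. -/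
def hGrad (f : Spin3 → ℝ) (x : Spin3) : ℝ := Real.sqrt (X1 f x ^ 2 + X2 f x ^ 2)

/-- The Kaplan norm `N(x) = ((x₁²+x₂²)² + 16x₃²)^{1/4}` on the Heisenberg group. -/
def kaplan (x : Spin3) : ℝ := ((x 0 ^ 2 + x 1 ^ 2) ^ 2 + 16 * x 2 ^ 2) ^ ((1 : ℝ) / 4)

/-- The normalised measure `ν = Z⁻¹ e^{−α N^p} dx` on `ℝ³`. -/
def nuKaplan (α p Z : ℝ) : Measure Spin3 :=
  (ENNReal.ofReal Z)⁻¹ •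
    volume.withDensity fun x => ENNReal.ofReal (Real.exp (-(α * kaplan x ^ p)))

/-! The fields `X¹`, `X²` are invariant under right translations, so left translation along a
horizontal curve `γ` moves every point `x` along the horizontal curve `s ↦ γ(s) ∘ x`, and it
preserves Lebesgue measure. Hence `∫ |f(γ(1) ∘ x) - f(x)|^q` is controlled by the energy, with any
weight that does not decrease along the curves.

Far from the origin the weight `e^{-αN^p}` can be made to grow along one of eight such curves. An
initial velocity `(±1, ±1)` opposed to the gradient of `N⁴` decreases `N`, except near the vertical
axis, where the gradient degenerates; there it is the bending of the curve that decreases `|x₃|`.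
After a dilation by `L`, the function `N^p` drops by at least `L²/40`, so the weight grows by a
factor `e^{αL²/40}`. For large `L`, the integral of `|f|^q` is thereby absorbed into its part over
the compact set `{N ≤ 120 L}` and the energy. On a compact set, `f` is close in `L^q` to a
constant, which is found by averaging over the end points of curves joining the set to a ball.
Applying the first bound to `f` minus that constant gives the spectral gap. -/

open Set Function
open scoped NNReal

section Lp

variable {Ω F : Type*} [MeasurableSpace Ω] [NormedAddCommGroup F]

lemma lintegral_rpow_le (μ : Measure Ω) [IsProbabilityMeasure μ] {q : ℝ} (hq : 1 ≤ q)
    {g : Ω → ℝ≥0∞} (hg : AEMeasurable g μ) : (∫⁻ x, g x ∂μ) ^ q ≤ ∫⁻ x, g x ^ q ∂μ := by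
  have h := eLpNorm'_le_eLpNorm'_of_exponent_le one_pos hq μ hg.aestronglyMeasurable
  simp only [eLpNorm', enorm_eq_self, ENNReal.rpow_one, div_one] at h
  rwa [one_div, ENNReal.le_rpow_inv_iff (by linarith)] at h

lemma enorm_rpow_le_two_rpow_mul_add {q : ℝ} (hq : 1 ≤ q) (a b : F) :
    ‖a‖ₑ ^ q ≤ 2 ^ (q - 1) * (‖a - b‖ₑ ^ q + ‖b‖ₑ ^ q) :=
  calc ‖a‖ₑ ^ q ≤ (‖a - b‖ₑ + ‖b‖ₑ) ^ q := by
        gcongr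
        simpa using enorm_add_le (a - b) b
    _ ≤ 2 ^ (q - 1) * (‖a - b‖ₑ ^ q + ‖b‖ₑ ^ q) := ENNReal.rpow_add_le_mul_rpow_add_rpow _ _ hq

lemma two_rpow_sub_one_mul_two (q : ℝ) : (2 : ℝ≥0∞) ^ (q - 1) * 2 = 2 ^ q := by
  conv_lhs => rw [← ENNReal.rpow_one 2, ← ENNReal.rpow_mul, one_mul,
    ← ENNReal.rpow_add _ _ two_ne_zero ENNReal.ofNat_ne_top]
  simp

lemma lintegral_enorm_sub_integral_rpow_le [NormedSpace ℝ F] [CompleteSpace F]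
    (μ : Measure Ω) [IsProbabilityMeasure μ] {q : ℝ} (hq : 1 ≤ q) {f : Ω → F}
    (hf : AEStronglyMeasurable f μ) (c : F) :
    ∫⁻ x, ‖f x - ∫ y, f y ∂μ‖ₑ ^ q ∂μ ≤ 2 ^ q * ∫⁻ x, ‖f x - c‖ₑ ^ q ∂μ := by
  have hq0 : 0 < q := by linarith
  set I := ∫⁻ x, ‖f x - c‖ₑ ^ q ∂μ
  rcases eq_or_ne I ⊤ with hI | hI
  · simp [hI, ENNReal.mul_top]
  have hfc : AEStronglyMeasurable (fun x ↦ f x - c) μ := hf.sub aestronglyMeasurable_const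
  have hjensen : (∫⁻ x, ‖f x - c‖ₑ ∂μ) ^ q ≤ I := lintegral_rpow_le μ hq hfc.enorm
  have hint : Integrable (fun x ↦ f x - c) μ :=
    ⟨hfc, (ENNReal.rpow_lt_top_iff_of_pos hq0).1 (hjensen.trans_lt hI.lt_top)⟩
  have hmean : ∫ y, f y ∂μ = c + ∫ y, (f y - c) ∂μ := by
    have hf_int : Integrable f μ := by simpa [Pi.add_def] using hint.add (integrable_const c)
    simp [integral_sub hf_int]
  have hmean_le : ‖c - ∫ y, f y ∂μ‖ₑ ^ q ≤ I := by
    rw [hmean, sub_add_cancel_left, enorm_neg]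
    exact (ENNReal.rpow_le_rpow (enorm_integral_le_lintegral_enorm _) hq0.le).trans hjensen
  calc ∫⁻ x, ‖f x - ∫ y, f y ∂μ‖ₑ ^ q ∂μ
      ≤ ∫⁻ x, 2 ^ (q - 1) * (‖f x - c‖ₑ ^ q + ‖c - ∫ y, f y ∂μ‖ₑ ^ q) ∂μ := by
        refine lintegral_mono fun x ↦ ?_
        simpa using enorm_rpow_le_two_rpow_mul_add hq (f x - ∫ y, f y ∂μ) (c - ∫ y, f y ∂μ)
    _ = 2 ^ (q - 1) * (I + ‖c - ∫ y, f y ∂μ‖ₑ ^ q) := by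
        rw [lintegral_const_mul' _ _ (by finiteness), lintegral_add_right _ measurable_const]
        simp [I]
    _ ≤ 2 ^ (q - 1) * (I + I) := by gcongr
    _ = 2 ^ q * I := by rw [← two_mul, ← mul_assoc, two_rpow_sub_one_mul_two]

lemma setLIntegral_enorm_rpow_mul_le_of_displacement {μ : Measure Ω} {q : ℝ} (hq : 1 ≤ q)
    {f : Ω → F} (hf : StronglyMeasurable f) {ρ : Ω → ℝ≥0∞} (hρ : Measurable ρ)
    {Φ : Ω → Ω} (hΦ : MeasurePreserving Φ μ μ) {D : Set Ω} (hD : MeasurableSet D)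
    {δ : ℝ≥0∞} (hδ : ∀ x ∈ D, ρ x ≤ δ * ρ (Φ x)) :
    ∫⁻ x in D, ‖f x‖ₑ ^ q * ρ x ∂μ ≤ 2 ^ (q - 1) *
      ((∫⁻ x in D, ‖f (Φ x) - f x‖ₑ ^ q * ρ x ∂μ) + δ * ∫⁻ x, ‖f x‖ₑ ^ q * ρ x ∂μ) := by
  have hmeas : Measurable fun x ↦ ‖f x‖ₑ ^ q * ρ x := (hf.enorm.pow_const q).mul hρ
  have hdiff : Measurable fun x ↦ ‖f (Φ x) - f x‖ₑ ^ q * ρ x :=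
    (((hf.comp_measurable hΦ.measurable).sub hf).enorm.pow_const q).mul hρ
  have hcomp : Measurable fun x ↦ ‖f (Φ x)‖ₑ ^ q * ρ (Φ x) := hmeas.comp hΦ.measurable
  have hpt (x : Ω) (hx : x ∈ D) : ‖f x‖ₑ ^ q * ρ x ≤ 2 ^ (q - 1) *
      (‖f (Φ x) - f x‖ₑ ^ q * ρ x + δ * (‖f (Φ x)‖ₑ ^ q * ρ (Φ x))) := by
    have hsplit := enorm_rpow_le_two_rpow_mul_add hq (f x) (f (Φ x))
    rw [← enorm_neg (f x - _), neg_sub] at hsplit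
    calc ‖f x‖ₑ ^ q * ρ x
        ≤ 2 ^ (q - 1) * (‖f (Φ x) - f x‖ₑ ^ q + ‖f (Φ x)‖ₑ ^ q) * ρ x := by gcongr
      _ = 2 ^ (q - 1) * (‖f (Φ x) - f x‖ₑ ^ q * ρ x + ‖f (Φ x)‖ₑ ^ q * ρ x) := by
          rw [mul_assoc, add_mul]
      _ ≤ 2 ^ (q - 1) * (‖f (Φ x) - f x‖ₑ ^ q * ρ x + ‖f (Φ x)‖ₑ ^ q * (δ * ρ (Φ x))) := by
          gcongr
          exact hδ x hx
      _ = _ := by rw [mul_left_comm δ]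
  calc ∫⁻ x in D, ‖f x‖ₑ ^ q * ρ x ∂μ
      ≤ ∫⁻ x in D, 2 ^ (q - 1) *
          (‖f (Φ x) - f x‖ₑ ^ q * ρ x + δ * (‖f (Φ x)‖ₑ ^ q * ρ (Φ x))) ∂μ :=
        setLIntegral_mono' hD hpt
    _ = 2 ^ (q - 1) * ((∫⁻ x in D, ‖f (Φ x) - f x‖ₑ ^ q * ρ x ∂μ) +
          δ * ∫⁻ x in D, ‖f (Φ x)‖ₑ ^ q * ρ (Φ x) ∂μ) := by
        rw [lintegral_const_mul' _ _ (by finiteness), lintegral_add_left hdiff,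
          lintegral_const_mul _ hcomp]
    _ ≤ 2 ^ (q - 1) * ((∫⁻ x in D, ‖f (Φ x) - f x‖ₑ ^ q * ρ x ∂μ) +
          δ * ∫⁻ x, ‖f (Φ x)‖ₑ ^ q * ρ (Φ x) ∂μ) := by
        gcongr
        exact Measure.restrict_le_self
    _ = _ := by rw [hΦ.lintegral_comp hmeas]

theorem lintegral_enorm_rpow_mul_le_of_displacement {μ : Measure Ω} {q : ℝ} (hq : 1 ≤ q)
    {f : Ω → F} (hf : StronglyMeasurable f) {ρ : Ω → ℝ≥0∞} (hρ : Measurable ρ)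
    {ι : Type*} [Fintype ι] {Φ : ι → Ω → Ω} (hΦ : ∀ i, MeasurePreserving (Φ i) μ μ)
    {K : Set Ω} {D : ι → Set Ω} (hD : ∀ i, MeasurableSet (D i)) (hKD : Kᶜ ⊆ ⋃ i, D i)
    {δ : ℝ≥0∞} (hδ : ∀ i, ∀ x ∈ D i, ρ x ≤ δ * ρ (Φ i x))
    (hδι : 2 ^ q * (Fintype.card ι * δ) ≤ 1) (hfin : ∫⁻ x, ‖f x‖ₑ ^ q * ρ x ∂μ ≠ ⊤) :
    ∫⁻ x, ‖f x‖ₑ ^ q * ρ x ∂μ ≤ 2 * (∫⁻ x in K, ‖f x‖ₑ ^ q * ρ x ∂μ) +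
      2 ^ q * ∑ i, ∫⁻ x in D i, ‖f (Φ i x) - f x‖ₑ ^ q * ρ x ∂μ := by
  set A := ∫⁻ x, ‖f x‖ₑ ^ q * ρ x ∂μ
  set B := ∫⁻ x in K, ‖f x‖ₑ ^ q * ρ x ∂μ
  set V : ι → ℝ≥0∞ := fun i ↦ ∫⁻ x in D i, ‖f (Φ i x) - f x‖ₑ ^ q * ρ x ∂μ
  have hcover : A ≤ B + ∑ i, 2 ^ (q - 1) * (V i + δ * A) :=
    calc A = ∫⁻ x in K ∪ ⋃ i, D i, ‖f x‖ₑ ^ q * ρ x ∂μ := by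
          rw [compl_subset_iff_union.1 hKD, setLIntegral_univ]
      _ ≤ B + ∑' i, ∫⁻ x in D i, ‖f x‖ₑ ^ q * ρ x ∂μ :=
          (lintegral_union_le _ _ _).trans (by gcongr; exact lintegral_iUnion_le _ _)
      _ ≤ B + ∑ i, 2 ^ (q - 1) * (V i + δ * A) := by
          rw [tsum_fintype]
          gcongr with i
          exact setLIntegral_enorm_rpow_mul_le_of_displacement hq hf hρ (hΦ i) (hD i) (hδ i)
  refine (ENNReal.add_le_add_iff_right hfin).1 ?_
  calc A + A = 2 * A := (two_mul A).symm
    _ ≤ 2 * (B + ∑ i, 2 ^ (q - 1) * (V i + δ * A)) := by gcongr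
    _ = 2 * B + 2 ^ (q - 1) * 2 * ∑ i, V i + 2 ^ (q - 1) * 2 * (Fintype.card ι * δ) * A := by
        rw [← Finset.mul_sum, Finset.sum_add_distrib, Finset.sum_const, nsmul_eq_mul,
          Finset.card_univ]
        generalize (2 : ℝ≥0∞) ^ (q - 1) = b
        ring
    _ ≤ 2 * B + 2 ^ q * ∑ i, V i + 1 * A := by rw [two_rpow_sub_one_mul_two]; gcongr
    _ = 2 * B + 2 ^ q * ∑ i, V i + A := by rw [one_mul]

theorem exists_lintegral_le_of_forall_lintegral_mul_le {μ : Measure Ω} [SFinite μ]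
    {m : Ω → Ω → Ω} (hm : Measurable (uncurry m)) (hmp : ∀ x, MeasurePreserving (m · x) μ μ)
    {B K G : Set Ω} (hB : MeasurableSet B) (hK : MeasurableSet K) (hG : MeasurableSet G)
    (hBKG : ∀ x ∈ B, ∀ g, m g x ∈ K → g ∈ G) (hK0 : μ K ≠ 0) (hKtop : μ K ≠ ⊤)
    {H : Ω → Ω → ℝ≥0∞} (hH : Measurable (uncurry H)) {c : ℝ≥0∞}
    (hc : ∀ g ∈ G, ∫⁻ x in B, H x (m g x) ∂μ ≤ c) :
    ∃ y ∈ K, ∫⁻ x in B, H x y ∂μ ≤ c * μ G / μ K := by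
  have hswap : ∫⁻ y in K, ∫⁻ x in B, H x y ∂μ ∂μ ≤ c * μ G :=
    calc ∫⁻ y in K, ∫⁻ x in B, H x y ∂μ ∂μ
        = ∫⁻ x in B, ∫⁻ y in K, H x y ∂μ ∂μ :=
          lintegral_lintegral_swap (hH.comp measurable_swap).aemeasurable
      _ ≤ ∫⁻ x in B, ∫⁻ g in G, H x (m g x) ∂μ ∂μ := by
          refine setLIntegral_mono' hB fun x hx ↦ ?_
          rw [← (hmp x).setLIntegral_comp_preimage hK hH.of_uncurry_left]
          exact lintegral_mono_set fun g hg ↦ hBKG x hx g hg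
      _ = ∫⁻ g in G, ∫⁻ x in B, H x (m g x) ∂μ ∂μ :=
          lintegral_lintegral_swap
            (hH.comp (measurable_fst.prodMk (hm.comp measurable_swap))).aemeasurable
      _ ≤ ∫⁻ _ in G, c ∂μ := setLIntegral_mono' hG hc
      _ = c * μ G := setLIntegral_const _ _
  obtain ⟨y, hyK, hy⟩ := exists_le_setLAverage hK0 hKtop
    (hH.lintegral_prod_left (μ := μ.restrict B)).aemeasurable
  exact ⟨y, hyK, hy.trans (by rw [setLAverage_eq]; gcongr)⟩

end Lp

section Flow

lemma ae_differentiableAt_of_locallyLipschitz {E F : Type*} [NormedAddCommGroup E]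
    [NormedSpace ℝ E] [FiniteDimensional ℝ E] [MeasurableSpace E] [BorelSpace E]
    [NormedAddCommGroup F] [NormedSpace ℝ F] [FiniteDimensional ℝ F] {f : E → F}
    (hf : LocallyLipschitz f) (μ : Measure E) [μ.IsAddHaarMeasure] :
    ∀ᵐ x ∂μ, DifferentiableAt ℝ f x := by
  have hball (n : ℕ) : ∀ᵐ x ∂μ, x ∈ Metric.ball (0 : E) n → DifferentiableAt ℝ f x := by
    obtain ⟨C, hC⟩ := hf.locallyLipschitzOn.exists_lipschitzOnWith_of_compact
      (isCompact_closedBall (0 : E) n)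
    filter_upwards [(hC.mono Metric.ball_subset_closedBall).ae_differentiableWithinAt_of_mem
      (μ := μ)] with x hx hxn
    exact (hx hxn).differentiableAt (Metric.isOpen_ball.mem_nhds hxn)
  filter_upwards [ae_all_iff.2 hball] with x hx
  obtain ⟨n, hn⟩ := exists_nat_gt (dist x 0)
  exact hx n hn

lemma enorm_sub_rpow_le_lintegral_deriv {q : ℝ} (hq : 1 ≤ q) {φ : ℝ → ℝ}
    (hφ : LocallyLipschitz φ) :
    ‖φ 1 - φ 0‖ₑ ^ q ≤ ∫⁻ s in Icc (0 : ℝ) 1, ‖deriv φ s‖ₑ ^ q := by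
  obtain ⟨C, hC⟩ := hφ.locallyLipschitzOn.exists_lipschitzOnWith_of_compact
    (isCompact_uIcc (a := (0 : ℝ)) (b := 1))
  have hftc := hC.absolutelyContinuousOnInterval.integral_deriv_eq_sub
  rw [intervalIntegral.integral_of_le zero_le_one, ← integral_Icc_eq_integral_Ioc] at hftc
  have : IsProbabilityMeasure (volume.restrict (Icc (0 : ℝ) 1)) := ⟨by simp⟩
  calc ‖φ 1 - φ 0‖ₑ ^ q
      ≤ (∫⁻ s in Icc (0 : ℝ) 1, ‖deriv φ s‖ₑ) ^ q := by
        rw [← hftc]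
        gcongr
        exact enorm_integral_le_lintegral_enorm _
    _ ≤ ∫⁻ s in Icc (0 : ℝ) 1, ‖deriv φ s‖ₑ ^ q :=
        lintegral_rpow_le _ hq (measurable_deriv φ).enorm.aemeasurable

lemma ae_ae_comp_of_quasiMeasurePreserving {S Ω Ω' : Type*} [MeasurableSpace S]
    [MeasurableSpace Ω] [MeasurableSpace Ω'] {ν : Measure S} [SFinite ν] {μ : Measure Ω}
    [SFinite μ] {μ' : Measure Ω'} {Ψ : S → Ω → Ω'} (hΨ : Measurable (uncurry Ψ))
    (hΨμ : ∀ s, Measure.QuasiMeasurePreserving (Ψ s) μ μ') {p : Ω' → Prop}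
    (hp : MeasurableSet {y | p y}) (h : ∀ᵐ y ∂μ', p y) :
    ∀ᵐ x ∂μ, ∀ᵐ s ∂ν, p (Ψ s x) :=
  (Measure.ae_ae_comm (p := fun s x ↦ p (Ψ s x)) (hΨ hp)).1 (.of_forall fun s ↦ (hΨμ s).ae h)

variable {E : Type*} [NormedAddCommGroup E] [NormedSpace ℝ E] [FiniteDimensional ℝ E]
  [MeasurableSpace E] [BorelSpace E] {μ : Measure E} [μ.IsAddHaarMeasure]

theorem setLIntegral_enorm_flow_sub_rpow_mul_le {q : ℝ} (hq : 1 ≤ q) {f : E → ℝ}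
    (hf : LocallyLipschitz f) {Ψ : ℝ → E → E} (hΨ : Measurable (uncurry Ψ))
    (hΨμ : ∀ s, MeasurePreserving (Ψ s) μ μ) (hΨL : ∀ x, LocallyLipschitz (Ψ · x))
    {G : E → ℝ≥0∞} (hG : Measurable G)
    (hΨG : ∀ x, ∀ s ∈ Icc (0 : ℝ) 1, DifferentiableAt ℝ f (Ψ s x) →
      ‖deriv (fun τ ↦ f (Ψ τ x)) s‖ₑ ≤ G (Ψ s x))
    {D : Set E} (hD : MeasurableSet D) {k r : E → ℝ≥0∞} (hk : Measurable k) (hr : Measurable r)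
    (hkr : ∀ x ∈ D, ∀ s ∈ Icc (0 : ℝ) 1, k x ≤ r (Ψ s x)) :
    ∫⁻ x in D, ‖f (Ψ 1 x) - f (Ψ 0 x)‖ₑ ^ q * k x ∂μ ≤ ∫⁻ x, G x ^ q * r x ∂μ := by
  have hGr : Measurable fun x ↦ G x ^ q * r x := (hG.pow_const q).mul hr
  have hGΨ : Measurable fun z : E × ℝ ↦ G (Ψ z.2 z.1) ^ q * k z.1 :=
    ((hG.comp (hΨ.comp measurable_swap)).pow_const q).mul (hk.comp measurable_fst)
  have hdiff : ∀ᵐ x ∂μ, ∀ᵐ s ∂volume.restrict (Icc (0 : ℝ) 1), DifferentiableAt ℝ f (Ψ s x) :=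
    ae_ae_comp_of_quasiMeasurePreserving hΨ (fun s ↦ (hΨμ s).quasiMeasurePreserving)
      (measurableSet_of_differentiableAt ℝ f) (ae_differentiableAt_of_locallyLipschitz hf μ)
  have hpath : ∀ᵐ x ∂μ, ‖f (Ψ 1 x) - f (Ψ 0 x)‖ₑ ^ q * k x ≤
      ∫⁻ s in Icc (0 : ℝ) 1, G (Ψ s x) ^ q * k x := by
    filter_upwards [hdiff] with x hx
    have hGx : Measurable fun s ↦ G (Ψ s x) ^ q :=
      (hG.comp (hΨ.comp (measurable_id.prodMk measurable_const))).pow_const q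
    rw [lintegral_mul_const _ hGx]
    gcongr
    refine (enorm_sub_rpow_le_lintegral_deriv hq (hf.comp (hΨL x))).trans (lintegral_mono_ae ?_)
    filter_upwards [hx, ae_restrict_mem measurableSet_Icc] with s hs hs01
    gcongr
    exact hΨG x s hs01 hs
  calc ∫⁻ x in D, ‖f (Ψ 1 x) - f (Ψ 0 x)‖ₑ ^ q * k x ∂μ
      ≤ ∫⁻ x in D, (∫⁻ s in Icc (0 : ℝ) 1, G (Ψ s x) ^ q * k x) ∂μ :=
        lintegral_mono_ae (ae_restrict_of_ae hpath)
    _ = ∫⁻ s in Icc (0 : ℝ) 1, ∫⁻ x in D, G (Ψ s x) ^ q * k x ∂μ :=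
        lintegral_lintegral_swap hGΨ.aemeasurable
    _ ≤ ∫⁻ _ in Icc (0 : ℝ) 1, ∫⁻ x, G x ^ q * r x ∂μ := by
        refine setLIntegral_mono' measurableSet_Icc fun s hs ↦ ?_
        rw [← (hΨμ s).lintegral_comp hGr]
        refine (setLIntegral_mono' hD fun x hx ↦ ?_).trans (setLIntegral_le_lintegral _ _)
        gcongr
        exact hkr x hx s hs
    _ = ∫⁻ x, G x ^ q * r x ∂μ := by simp

end Flow

section Truncation

/-- The truncation of a real number to `[-n, n]`. -/
def truncate (n : ℕ) (y : ℝ) : ℝ := max (-n) (min n y)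

lemma lipschitzWith_truncate (n : ℕ) : LipschitzWith 1 (truncate n) :=
  (LipschitzWith.id.const_min _).const_max _

lemma enorm_truncate_le_natCast (n : ℕ) (y : ℝ) : ‖truncate n y‖ₑ ≤ n := by
  have habs : |truncate n y| ≤ n :=
    abs_le.2 ⟨le_max_left .., max_le (neg_le_self n.cast_nonneg) (min_le_left ..)⟩
  simpa [Real.enorm_eq_ofReal_abs] using ENNReal.ofReal_le_ofReal habs

lemma truncate_eq_self {n : ℕ} {y : ℝ} (h : |y| ≤ n) : truncate n y = y := by
  rw [truncate, min_eq_right (abs_le.1 h).2, max_eq_right (abs_le.1 h).1]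

lemma enorm_truncate_le (n : ℕ) (y : ℝ) : ‖truncate n y‖ₑ ≤ ‖y‖ₑ := by
  have h0 : truncate n 0 = 0 := truncate_eq_self (by simp)
  simpa [h0, edist_zero_right] using lipschitzWith_truncate n y 0

lemma lintegral_enorm_rpow_mul_le_of_forall_truncate {Ω : Type*} [MeasurableSpace Ω]
    {μ : Measure Ω} {q : ℝ} {f : Ω → ℝ} (hf : Measurable f) {ρ : Ω → ℝ≥0∞} (hρ : Measurable ρ)
    {A : ℝ≥0∞} (hA : ∀ n, ∫⁻ x, ‖truncate n (f x)‖ₑ ^ q * ρ x ∂μ ≤ A) :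
    ∫⁻ x, ‖f x‖ₑ ^ q * ρ x ∂μ ≤ A := by
  have hmeas (n : ℕ) : Measurable fun x ↦ ‖truncate n (f x)‖ₑ ^ q * ρ x :=
    (((lipschitzWith_truncate n).continuous.measurable.comp hf).enorm.pow_const q).mul hρ
  have hlim (x : Ω) : Tendsto (fun n ↦ ‖truncate n (f x)‖ₑ ^ q * ρ x) atTop
      (nhds (‖f x‖ₑ ^ q * ρ x)) := by
    refine tendsto_const_nhds.congr' ?_
    filter_upwards [eventually_ge_atTop ⌈|f x|⌉₊] with n hn
    rw [truncate_eq_self (Nat.ceil_le.1 hn)]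
  calc ∫⁻ x, ‖f x‖ₑ ^ q * ρ x ∂μ
      = ∫⁻ x, liminf (fun n ↦ ‖truncate n (f x)‖ₑ ^ q * ρ x) atTop ∂μ :=
        lintegral_congr fun x ↦ (hlim x).liminf_eq.symm
    _ ≤ liminf (fun n ↦ ∫⁻ x, ‖truncate n (f x)‖ₑ ^ q * ρ x ∂μ) atTop :=
        lintegral_liminf_le hmeas
    _ ≤ A := liminf_le_of_le (by isBoundedDefault) fun b hb ↦ by
        obtain ⟨n, hn⟩ := hb.exists
        exact hn.trans (hA n)

lemma abs_fderiv_comp_le {E : Type*} [NormedAddCommGroup E] [NormedSpace ℝ E] {T : ℝ → ℝ}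
    (hT : LipschitzWith 1 T) {f : E → ℝ} {x : E} (hf : DifferentiableAt ℝ f x) (v : E) :
    |fderiv ℝ (T ∘ f) x v| ≤ |fderiv ℝ f x v| := by
  by_cases hTf : DifferentiableAt ℝ (T ∘ f) x
  · refine le_of_tendsto_of_tendsto' (hTf.hasFDerivAt.hasLineDerivAt v).tendsto_slope_zero.abs
      (hf.hasFDerivAt.hasLineDerivAt v).tendsto_slope_zero.abs fun t ↦ ?_
    simp only [smul_eq_mul, abs_mul, comp_apply]
    refine mul_le_mul_of_nonneg_left ?_ (abs_nonneg _)
    simpa [Real.dist_eq] using hT.dist_le_mul (f (x + t • v)) (f x)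
  · simp [fderiv_zero_of_not_differentiableAt hTf]

end Truncation

section Heisenberg

/-- The Heisenberg group law `g ∘ x`. -/
def heisMul (g x : Spin3) : Spin3 :=
  ![g 0 + x 0, g 1 + x 1, g 2 + x 2 + 2 * (g 0 * x 1 - g 1 * x 0)]

/-- The value at `x` of the horizontal vector field `v₁X¹ + v₂X²`. -/
def heisField (v : ℝ × ℝ) (x : Spin3) : Spin3 := ![v.1, v.2, 2 * (x 1 * v.1 - x 0 * v.2)]

/-- The horizontal curve issuing from the origin whose horizontal projection is `su + s²w`. -/
def horizontalCurve (u w : ℝ × ℝ) (s : ℝ) : Spin3 :=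
  ![s * u.1 + s ^ 2 * w.1, s * u.2 + s ^ 2 * w.2, -(2 / 3) * s ^ 3 * (u.1 * w.2 - u.2 * w.1)]

/-- The translation by `horizontalCurve u w s`. The fields `X¹`, `X²` are invariant under right
translations, so `s ↦ horizontalFlow u w s x` is horizontal for every `x`. -/
def horizontalFlow (u w : ℝ × ℝ) (s : ℝ) : Spin3 → Spin3 := heisMul (horizontalCurve u w s)

lemma measurePreserving_toLin'_add {ι : Type*} [Fintype ι] [DecidableEq ι] {M : Matrix ι ι ℝ}
    (hM : M.det = 1) (b : ι → ℝ) :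
    MeasurePreserving (fun x : ι → ℝ ↦ Matrix.toLin' M x + b) volume volume := by
  have hlin : MeasurePreserving (Matrix.toLin' M) volume volume :=
    ⟨(Matrix.toLin' M).continuous_of_finiteDimensional.measurable, by
      simp [Real.map_matrix_volume_pi_eq_smul_volume_pi (hM ▸ one_ne_zero), hM]⟩
  exact (measurePreserving_add_right volume b).comp hlin

lemma measurePreserving_heisMul_left (g : Spin3) :
    MeasurePreserving (heisMul g) volume volume := by
  convert measurePreserving_toLin'_add (M := !![1, 0, 0; 0, 1, 0; -2 * g 1, 2 * g 0, 1])
    (by simp [Matrix.det_fin_three]) g using 1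
  ext x i
  fin_cases i <;> simp [heisMul, dotProduct, Fin.sum_univ_three] <;> ring

lemma measurePreserving_heisMul_right (x : Spin3) :
    MeasurePreserving (heisMul · x) volume volume := by
  convert measurePreserving_toLin'_add (M := !![1, 0, 0; 0, 1, 0; 2 * x 1, -2 * x 0, 1])
    (by simp [Matrix.det_fin_three]) x using 1
  ext g i
  fin_cases i <;> simp [heisMul, dotProduct, Fin.sum_univ_three]; ring

lemma continuous_heisMul : Continuous (uncurry heisMul) := by
  unfold heisMul uncurry
  fun_prop

lemma continuous_horizontalCurve :
    Continuous fun z : (ℝ × ℝ) × (ℝ × ℝ) × ℝ ↦ horizontalCurve z.1 z.2.1 z.2.2 := by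
  unfold horizontalCurve
  fun_prop

lemma continuous_horizontalFlow (u w : ℝ × ℝ) : Continuous (uncurry (horizontalFlow u w)) :=
  continuous_heisMul.comp <| (continuous_horizontalCurve.comp
    (continuous_const.prodMk (continuous_const.prodMk continuous_fst))).prodMk continuous_snd

lemma hasDerivAt_horizontalFlow (u w : ℝ × ℝ) (s : ℝ) (x : Spin3) :
    HasDerivAt (horizontalFlow u w · x)
      (heisField (u + (2 * s) • w) (horizontalFlow u w s x)) s := by
  have h (a b : ℝ) : HasDerivAt (fun τ : ℝ ↦ τ * a + τ ^ 2 * b) (a + 2 * s * b) s := by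
    simpa using ((hasDerivAt_id s).mul_const a).fun_add ((hasDerivAt_pow 2 s).mul_const b)
  rw [hasDerivAt_pi]
  intro i
  fin_cases i
  · simpa [horizontalFlow, horizontalCurve, heisMul, heisField] using
      (h u.1 w.1).add_const (x 0)
  · simpa [horizontalFlow, horizontalCurve, heisMul, heisField] using
      (h u.2 w.2).add_const (x 1)
  · have hcube := ((hasDerivAt_pow 3 s).const_mul (-(2 / 3))).mul_const (u.1 * w.2 - u.2 * w.1)
    convert! (hcube.add_const (x 2)).fun_add
      ((((h u.1 w.1).mul_const (x 1)).fun_sub ((h u.2 w.2).mul_const (x 0))).const_mul 2) using 1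
    simp [horizontalFlow, horizontalCurve, heisMul, heisField]
    ring

lemma locallyLipschitz_horizontalFlow (u w : ℝ × ℝ) (x : Spin3) :
    LocallyLipschitz (horizontalFlow u w · x) := by
  refine ContDiff.locallyLipschitz (𝕂 := ℝ) (contDiff_pi.2 fun i ↦ ?_)
  fin_cases i <;> simp only [horizontalFlow, horizontalCurve, heisMul, Fin.zero_eta, Fin.mk_one,
    Fin.reduceFinMk, Matrix.cons_val] <;> fun_prop

@[simp]
lemma horizontalFlow_zero (u w : ℝ × ℝ) (x : Spin3) : horizontalFlow u w 0 x = x := by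
  ext i
  fin_cases i <;> simp [horizontalFlow, horizontalCurve, heisMul]

lemma hGrad_nonneg (f : Spin3 → ℝ) (x : Spin3) : 0 ≤ hGrad f x := Real.sqrt_nonneg _

lemma measurable_hGrad (f : Spin3 → ℝ) : Measurable (hGrad f) := by
  have := measurable_fderiv_apply_const ℝ f
  unfold hGrad X1 X2
  fun_prop

lemma fderiv_heisField (f : Spin3 → ℝ) (v : ℝ × ℝ) (x : Spin3) :
    fderiv ℝ f x (heisField v x) = v.1 * X1 f x + v.2 * X2 f x := by
  have hv : heisField v x = v.1 • (Pi.single 0 1 + (2 * x 1) • Pi.single 2 1 : Spin3) +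
      v.2 • (Pi.single 1 1 - (2 * x 0) • Pi.single 2 1 : Spin3) := by
    ext i
    fin_cases i <;> simp [heisField]
    ring
  rw [hv]
  simp only [map_add, map_sub, map_smul, smul_eq_mul, X1, X2]

lemma abs_fderiv_heisField_le (f : Spin3 → ℝ) (v : ℝ × ℝ) (x : Spin3) :
    |fderiv ℝ f x (heisField v x)| ≤ √(v.1 ^ 2 + v.2 ^ 2) * hGrad f x := by
  rw [fderiv_heisField, hGrad, ← Real.sqrt_mul (by positivity)]
  refine Real.abs_le_sqrt ?_
  linarith [sq_nonneg (v.1 * X2 f x - v.2 * X1 f x)]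

lemma hGrad_comp_le {T : ℝ → ℝ} (hT : LipschitzWith 1 T) {f : Spin3 → ℝ} {x : Spin3}
    (hf : DifferentiableAt ℝ f x) : hGrad (T ∘ f) x ≤ hGrad f x := by
  set v := (X1 (T ∘ f) x, X2 (T ∘ f) x)
  have hsq : hGrad (T ∘ f) x * hGrad (T ∘ f) x ≤ hGrad (T ∘ f) x * hGrad f x :=
    calc hGrad (T ∘ f) x * hGrad (T ∘ f) x = fderiv ℝ (T ∘ f) x (heisField v x) := by
          rw [fderiv_heisField, hGrad, Real.mul_self_sqrt (by positivity), sq, sq]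
      _ ≤ |fderiv ℝ (T ∘ f) x (heisField v x)| := le_abs_self _
      _ ≤ |fderiv ℝ f x (heisField v x)| := abs_fderiv_comp_le hT hf _
      _ ≤ hGrad (T ∘ f) x * hGrad f x := abs_fderiv_heisField_le f v x
  rcases (hGrad_nonneg (T ∘ f) x).eq_or_lt with h0 | hpos
  · exact h0 ▸ hGrad_nonneg f x
  · exact le_of_mul_le_mul_left hsq hpos

lemma lintegral_hGrad_comp_le {T : ℝ → ℝ} (hT : LipschitzWith 1 T) {f : Spin3 → ℝ}
    (hf : LocallyLipschitz f) {q : ℝ} (hq : 0 ≤ q) (r : Spin3 → ℝ≥0∞) :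
    ∫⁻ x, ‖hGrad (T ∘ f) x‖ₑ ^ q * r x ≤ ∫⁻ x, ‖hGrad f x‖ₑ ^ q * r x := by
  refine lintegral_mono_ae ?_
  filter_upwards [ae_differentiableAt_of_locallyLipschitz hf volume] with x hx
  gcongr
  rw [Real.enorm_of_nonneg (hGrad_nonneg _ _), Real.enorm_of_nonneg (hGrad_nonneg _ _)]
  exact ENNReal.ofReal_le_ofReal (hGrad_comp_le hT hx)

theorem setLIntegral_enorm_horizontalFlow_sub_rpow_mul_le {q : ℝ} (hq : 1 ≤ q) {f : Spin3 → ℝ}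
    (hf : LocallyLipschitz f) {u w : ℝ × ℝ} {M : ℝ≥0}
    (hM : ∀ s ∈ Icc (0 : ℝ) 1, √((u.1 + 2 * s * w.1) ^ 2 + (u.2 + 2 * s * w.2) ^ 2) ≤ M)
    {D : Set Spin3} (hD : MeasurableSet D) {k r : Spin3 → ℝ≥0∞} (hk : Measurable k)
    (hr : Measurable r) (hkr : ∀ x ∈ D, ∀ s ∈ Icc (0 : ℝ) 1, k x ≤ r (horizontalFlow u w s x)) :
    ∫⁻ x in D, ‖f (horizontalFlow u w 1 x) - f x‖ₑ ^ q * k x ≤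
      M ^ q * ∫⁻ x, ‖hGrad f x‖ₑ ^ q * r x := by
  have hderiv (x : Spin3) (s : ℝ) (hs : s ∈ Icc (0 : ℝ) 1)
      (hfx : DifferentiableAt ℝ f (horizontalFlow u w s x)) :
      ‖deriv (fun τ ↦ f (horizontalFlow u w τ x)) s‖ₑ ≤
        M * ‖hGrad f (horizontalFlow u w s x)‖ₑ := by
    have hchain := hfx.hasFDerivAt.comp_hasDerivAt s (hasDerivAt_horizontalFlow u w s x)
    rw [show deriv (fun τ ↦ f (horizontalFlow u w τ x)) s = _ from hchain.deriv,
      Real.enorm_eq_ofReal_abs, Real.enorm_of_nonneg (hGrad_nonneg _ _),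
      ← ENNReal.ofReal_coe_nnreal, ← ENNReal.ofReal_mul M.coe_nonneg]
    refine ENNReal.ofReal_le_ofReal ((abs_fderiv_heisField_le _ _ _).trans ?_)
    exact mul_le_mul_of_nonneg_right (hM s hs) (hGrad_nonneg _ _)
  have hG : Measurable fun x ↦ ‖hGrad f x‖ₑ := (measurable_hGrad f).enorm
  have hflow := setLIntegral_enorm_flow_sub_rpow_mul_le hq hf
    (continuous_horizontalFlow u w).measurable
    (fun s ↦ measurePreserving_heisMul_left (horizontalCurve u w s))
    (locallyLipschitz_horizontalFlow u w) (hG.const_mul (M : ℝ≥0∞)) hderiv hD hk hr hkr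
  simp only [horizontalFlow_zero, ENNReal.mul_rpow_of_nonneg _ _ (zero_le_one.trans hq),
    mul_assoc] at hflow
  rwa [lintegral_const_mul' _ _ (by finiteness)] at hflow

end Heisenberg

section Descent

lemma kaplan_nonneg (x : Spin3) : 0 ≤ kaplan x := by unfold kaplan; positivity

lemma kaplan_pow_four (x : Spin3) :
    kaplan x ^ 4 = (x 0 ^ 2 + x 1 ^ 2) ^ 2 + 16 * x 2 ^ 2 := by
  rw [kaplan, ← Real.rpow_natCast, ← Real.rpow_mul (by positivity)]
  norm_num

lemma kaplan_sq_le (x : Spin3) : kaplan x ^ 2 ≤ x 0 ^ 2 + x 1 ^ 2 + 4 * |x 2| := by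
  refine le_of_sq_le_sq ?_ (by positivity)
  nlinarith [kaplan_pow_four x, sq_abs (x 2), abs_nonneg (x 2), sq_nonneg (x 0), sq_nonneg (x 1)]

/-- The pair `(X¹, X²)` applied to `N⁴ / 4`. -/
def kaplanDrift (x : Spin3) : ℝ × ℝ :=
  ((x 0 ^ 2 + x 1 ^ 2) * x 0 + 16 * x 2 * x 1, (x 0 ^ 2 + x 1 ^ 2) * x 1 - 16 * x 2 * x 0)

/-- The initial velocity `(±1, ±1)` of the descent curve with signs `i`. -/
def descentDir (i : ℤˣ × ℤˣ × ℤˣ) : ℝ × ℝ := ((i.1 : ℤ), (i.2.1 : ℤ))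

/-- Half the acceleration of the descent curve with signs `i`: a quarter of the initial velocity,
turned by a right angle whose sense is the third sign and decides whether the curve rises or
sinks. -/
def descentBend (i : ℤˣ × ℤˣ × ℤˣ) : ℝ × ℝ :=
  (-((i.2.2 : ℤ) * (i.2.1 : ℤ) / 4), (i.2.2 : ℤ) * (i.1 : ℤ) / 4)

/-- The flow along the descent curve with signs `i`, enlarged by the factor `L`. -/
def descentFlow (L : ℝ) (i : ℤˣ × ℤˣ × ℤˣ) : ℝ → Spin3 → Spin3 :=
  horizontalFlow (L • descentDir i) (L • descentBend i)

lemma sq_intCast_units (σ : ℤˣ) : ((σ : ℤ) : ℝ) ^ 2 = 1 := by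
  rcases Int.units_eq_one_or σ with rfl | rfl <;> norm_num

lemma exists_intCast_units_mul_eq_abs (a : ℝ) : ∃ σ : ℤˣ, ((σ : ℤ) : ℝ) * a = |a| := by
  rcases abs_cases a with ⟨h, -⟩ | ⟨h, -⟩
  · exact ⟨1, by simp [h]⟩
  · exact ⟨-1, by simp [h]⟩

lemma descent_remainder_le (a b V₀ V₁ ε s : ℝ) (hε : ε ^ 2 = 1) (hs0 : 0 ≤ s) (hs1 : s ≤ 1)
    (hV : V₀ ^ 2 + V₁ ^ 2 = 2 * s ^ 2 + s ^ 4 / 8) :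
    6 * (a * V₀ + b * V₁) ^ 2 + 66 * (V₀ * b - V₁ * a) ^ 2 + (V₀ ^ 2 + V₁ ^ 2) ^ 2 +
        4 * (a * V₀ + b * V₁) * (V₀ ^ 2 + V₁ ^ 2) + 16 / 9 * s ^ 6 -
        64 / 3 * (ε * s ^ 3) * (V₀ * b - V₁ * a) ≤
      210 * (a ^ 2 + b ^ 2) * s ^ 2 + 13 * s ^ 4 := by
  set A := a * V₀ + b * V₁
  set B := V₀ * b - V₁ * a
  set W := V₀ ^ 2 + V₁ ^ 2
  have hAB : A ^ 2 + B ^ 2 = (a ^ 2 + b ^ 2) * W := by ring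
  have hs42 : s ^ 4 ≤ s ^ 2 := pow_le_pow_of_le_one hs0 hs1 (by norm_num)
  have hs64 : s ^ 6 ≤ s ^ 4 := pow_le_pow_of_le_one hs0 hs1 (by norm_num)
  have hW : W ≤ 17 / 8 * s ^ 2 := by linarith
  have hWsq : W ^ 2 ≤ (17 / 8) ^ 2 * s ^ 4 := by nlinarith [sq_nonneg V₀, sq_nonneg V₁]
  have hrW : (a ^ 2 + b ^ 2) * W ≤ (a ^ 2 + b ^ 2) * (17 / 8 * s ^ 2) := by gcongr
  have hAW : 4 * A * W ≤ 8 * A ^ 2 + W ^ 2 / 2 := by linarith [sq_nonneg (4 * A - W)]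
  have hεB : -(64 / 3 * (ε * s ^ 3) * B) ≤ 32 * B ^ 2 + 32 / 9 * s ^ 6 := by
    have : (ε * s ^ 3) ^ 2 = s ^ 6 := by rw [mul_pow, hε]; ring
    linarith [sq_nonneg (3 * B + ε * s ^ 3)]
  nlinarith [hAB, sq_nonneg A]

lemma kaplanDrift_mul_descent_le (G₀ G₁ σ τ ε s : ℝ) (hσ : σ ^ 2 = 1) (hτ : τ ^ 2 = 1)
    (hε : ε ^ 2 = 1) (h₀ : -σ * G₀ = |G₀|) (h₁ : -τ * G₁ = |G₁|) (hs0 : 0 ≤ s) (hs1 : s ≤ 1) :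
    4 * (G₀ * (s * σ + s ^ 2 * -(ε * τ / 4)) + G₁ * (s * τ + s ^ 2 * (ε * σ / 4))) ≤
      -(3 * s * (|G₀| + |G₁|)) := by
  have habs {σ : ℝ} (hσ : σ ^ 2 = 1) : |σ| = 1 := by
    simpa using (sq_eq_sq_iff_abs_eq_abs σ 1).1 (by simpa using hσ)
  have hturn : ε * (σ * G₁ - τ * G₀) ≤ |G₀| + |G₁| :=
    calc ε * (σ * G₁ - τ * G₀) ≤ |ε * (σ * G₁ - τ * G₀)| := le_abs_self _
      _ = |σ * G₁ - τ * G₀| := by rw [abs_mul, habs hε, one_mul]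
      _ ≤ |σ * G₁| + |τ * G₀| := abs_sub _ _
      _ = |G₀| + |G₁| := by rw [abs_mul, abs_mul, habs hσ, habs hτ, one_mul, one_mul, add_comm]
  have hs2 : s ^ 2 ≤ s := by nlinarith
  calc _ = -(4 * s * (-σ * G₀ + -τ * G₁)) + s ^ 2 * (ε * (σ * G₁ - τ * G₀)) := by ring
    _ ≤ -(4 * s * (|G₀| + |G₁|)) + s ^ 2 * (|G₀| + |G₁|) := by rw [h₀, h₁]; gcongr
    _ ≤ -(4 * s * (|G₀| + |G₁|)) + s * (|G₀| + |G₁|) := by gcongr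
    _ = -(3 * s * (|G₀| + |G₁|)) := by ring

lemma kaplan_pow_four_horizontalFlow_le {σ τ ε s : ℝ} {x : Spin3} (hσ : σ ^ 2 = 1)
    (hτ : τ ^ 2 = 1) (hε : ε ^ 2 = 1) (h₀ : -σ * (kaplanDrift x).1 = |(kaplanDrift x).1|)
    (h₁ : -τ * (kaplanDrift x).2 = |(kaplanDrift x).2|) (h₂ : ε * x 2 = |x 2|)
    (hs0 : 0 ≤ s) (hs1 : s ≤ 1) :
    kaplan (horizontalFlow (σ, τ) (-(ε * τ / 4), ε * σ / 4) s x) ^ 4 ≤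
      kaplan x ^ 4 - 3 * s * (|(kaplanDrift x).1| + |(kaplanDrift x).2|) - 32 / 3 * s ^ 3 * |x 2| +
        210 * (x 0 ^ 2 + x 1 ^ 2) * s ^ 2 + 13 * s ^ 4 := by
  set V₀ := s * σ + s ^ 2 * -(ε * τ / 4)
  set V₁ := s * τ + s ^ 2 * (ε * σ / 4)
  have hV : V₀ ^ 2 + V₁ ^ 2 = 2 * s ^ 2 + s ^ 4 / 8 := by
    linear_combination (s ^ 2 + s ^ 4 * ε ^ 2 / 16) * (hσ + hτ) + s ^ 4 / 8 * hε
  have hy : horizontalFlow (σ, τ) (-(ε * τ / 4), ε * σ / 4) s x =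
      ![x 0 + V₀, x 1 + V₁, x 2 - ε * s ^ 3 / 3 + 2 * (V₀ * x 1 - V₁ * x 0)] := by
    ext i
    fin_cases i
    · simp [horizontalFlow, horizontalCurve, heisMul, V₀, add_comm]
    · simp [horizontalFlow, horizontalCurve, heisMul, V₁, add_comm]
    · simp [horizontalFlow, horizontalCurve, heisMul]
      linear_combination -(s ^ 3 * ε / 6) * (hσ + hτ)
  have hdrift := kaplanDrift_mul_descent_le _ _ σ τ ε s hσ hτ hε h₀ h₁ hs0 hs1
  have hrem := descent_remainder_le (x 0) (x 1) V₀ V₁ ε s hε hs0 hs1 hV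
  simp only [kaplan_pow_four, hy, kaplanDrift, Matrix.cons_val] at hdrift ⊢
  linear_combination hdrift + hrem - 32 / 3 * s ^ 3 * h₂ + 16 / 9 * s ^ 6 * hε

lemma le_abs_kaplanDrift (x : Spin3) {r : ℝ} (hr : r ^ 2 = x 0 ^ 2 + x 1 ^ 2) :
    2 * (r ^ 3 + 16 * |x 2| * r) ≤ 3 * (|(kaplanDrift x).1| + |(kaplanDrift x).2|) := by
  set G := kaplanDrift x with hG
  have hGsq : G.1 ^ 2 + G.2 ^ 2 = (r ^ 3) ^ 2 + (16 * |x 2| * r) ^ 2 := by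
    simp only [hG, kaplanDrift, mul_pow, sq_abs]
    rw [← pow_mul, show 3 * 2 = 2 * 3 from rfl, pow_mul, hr]
    ring
  refine le_of_sq_le_sq ?_ (by positivity)
  nlinarith [sq_abs G.1, sq_abs G.2, mul_nonneg (abs_nonneg G.1) (abs_nonneg G.2),
    sq_nonneg (r ^ 3 - 16 * |x 2| * r)]

lemma le_or_le_of_le_kaplan {x : Spin3} {r : ℝ} (hr0 : 0 ≤ r) (hr : r ^ 2 = x 0 ^ 2 + x 1 ^ 2)
    (hx : 120 ≤ kaplan x) : 110 ≤ r ∨ 800 ≤ |x 2| := by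
  by_contra! h
  have hN : (120 : ℝ) ^ 4 ≤ kaplan x ^ 4 := by gcongr
  have hr4 : r ^ 4 ≤ 110 ^ 4 := by gcongr; exact h.1.le
  have ht2 : |x 2| ^ 2 ≤ 800 ^ 2 := by gcongr; exact h.2.le
  rw [kaplan_pow_four, ← hr, ← sq_abs (x 2)] at hN
  linarith

lemma descent_gain_ge {r T s : ℝ} (hr0 : 0 ≤ r) (hT0 : 0 ≤ T) (h : 110 ≤ r ∨ 800 ≤ T)
    (hs0 : 0 ≤ s) (hs1 : s ≤ 1) :
    s ^ 3 / 20 * (r ^ 2 + 4 * T) + 210 * r ^ 2 * s ^ 2 + 13 * s ^ 4 ≤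
      2 * s * (r ^ 3 + 16 * T * r) + 32 / 3 * s ^ 3 * T := by
  have hs2 : s ^ 2 ≤ s := by simpa using pow_le_pow_of_le_one hs0 hs1 one_le_two
  have hs3 : s ^ 3 ≤ s ^ 2 := pow_le_pow_of_le_one hs0 hs1 (by norm_num)
  have hs4 : s ^ 4 ≤ s ^ 3 := pow_le_pow_of_le_one hs0 hs1 (by norm_num)
  have hs3T : 0 ≤ s ^ 3 * T := by positivity
  have hr2s : r ^ 2 * (s ^ 3 / 20 + 210 * s ^ 2) ≤ r ^ 2 * (211 * s) := by gcongr; linarith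
  rcases le_or_gt 110 r with hr | hr
  · have hr3 : 220 * r ^ 2 * s ≤ 2 * r ^ 3 * s := by
      gcongr ?_ * s
      nlinarith [sq_nonneg r]
    have hTr : 0 ≤ s * (T * r) := by positivity
    have hr2 : 110 ^ 2 * s ≤ r ^ 2 * s := by gcongr
    linarith
  · have hT : 800 ≤ T := h.resolve_left hr.not_ge
    have hrT : 211 * r ^ 2 * s ≤ 32 * (T * r) * s := by
      gcongr ?_ * s
      nlinarith
    have hTs : 800 * s ^ 3 ≤ T * s ^ 3 := by gcongr
    have hr3 : 0 ≤ s * r ^ 3 := by positivity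
    linarith

lemma exists_kaplan_descentFlow_pow_four_le {x : Spin3} (hx : 120 ≤ kaplan x) :
    ∃ i, ∀ s ∈ Icc (0 : ℝ) 1,
      kaplan (descentFlow 1 i s x) ^ 4 ≤ kaplan x ^ 4 - s ^ 3 / 20 * kaplan x ^ 2 := by
  obtain ⟨σ, hσ⟩ := exists_intCast_units_mul_eq_abs (-(kaplanDrift x).1)
  obtain ⟨τ, hτ⟩ := exists_intCast_units_mul_eq_abs (-(kaplanDrift x).2)
  obtain ⟨ε, hε⟩ := exists_intCast_units_mul_eq_abs (x 2)
  rw [abs_neg, mul_neg, ← neg_mul] at hσ hτ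
  refine ⟨(σ, τ, ε), fun s ⟨hs0, hs1⟩ ↦ ?_⟩
  set r := √(x 0 ^ 2 + x 1 ^ 2)
  have hr : r ^ 2 = x 0 ^ 2 + x 1 ^ 2 := Real.sq_sqrt (by positivity)
  have hr0 : 0 ≤ r := Real.sqrt_nonneg _
  have hflow := kaplan_pow_four_horizontalFlow_le (sq_intCast_units σ) (sq_intCast_units τ)
    (sq_intCast_units ε) hσ hτ hε hs0 hs1
  have hdrift := mul_le_mul_of_nonneg_left (le_abs_kaplanDrift x hr) hs0
  have hgain := descent_gain_ge hr0 (abs_nonneg _) (le_or_le_of_le_kaplan hr0 hr hx) hs0 hs1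
  have hN := mul_le_mul_of_nonneg_left (kaplan_sq_le x) (by positivity : 0 ≤ s ^ 3 / 20)
  rw [← hr] at hflow hN
  simp only [descentFlow, one_smul, descentDir, descentBend]
  linarith

/-- The homogeneous dilation of the Heisenberg group. -/
def heisDilation (L : ℝ) (x : Spin3) : Spin3 := ![L * x 0, L * x 1, L ^ 2 * x 2]

lemma kaplan_heisDilation {L : ℝ} (hL : 0 ≤ L) (x : Spin3) :
    kaplan (heisDilation L x) = L * kaplan x := by
  refine (pow_left_inj₀ (kaplan_nonneg _) (mul_nonneg hL (kaplan_nonneg x)) four_ne_zero).1 ?_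
  rw [mul_pow, kaplan_pow_four, kaplan_pow_four]
  simp [heisDilation]
  ring

lemma horizontalFlow_heisDilation (L : ℝ) (u w : ℝ × ℝ) (s : ℝ) (x : Spin3) :
    horizontalFlow (L • u) (L • w) s (heisDilation L x) =
      heisDilation L (horizontalFlow u w s x) := by
  ext i
  fin_cases i <;> simp [horizontalFlow, horizontalCurve, heisMul, heisDilation] <;> ring

lemma sub_rpow_le_rpow_sub {a d m : ℝ} (ha : 1 ≤ a) (hd0 : 0 ≤ d) (hda : d ≤ a) (hm : 1 ≤ m) :
    (a - d) ^ m ≤ a ^ m - d := by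
  have ha0 : 0 < a := by linarith
  have hfrac0 : 0 ≤ 1 - d / a := sub_nonneg.2 ((div_le_one ha0).2 hda)
  have hfrac1 : 1 - d / a ≤ 1 := sub_le_self _ (by positivity)
  calc (a - d) ^ m = a ^ m * (1 - d / a) ^ m := by
        rw [← Real.mul_rpow ha0.le hfrac0]
        congr 1
        field_simp
    _ ≤ a ^ m * (1 - d / a) := by
        gcongr
        exact Real.rpow_le_self_of_le_one hfrac0 hfrac1 hm
    _ = a ^ m - a ^ m / a * d := by ring
    _ ≤ a ^ m - 1 * d := by
        gcongr
        exact (one_le_div ha0).2 (Real.self_le_rpow_of_one_le ha hm)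
    _ = a ^ m - d := by rw [one_mul]

theorem exists_kaplan_descentFlow_rpow_le {p L : ℝ} (hp : 2 ≤ p) (hL : 1 ≤ L) {x : Spin3}
    (hx : 120 * L ≤ kaplan x) :
    ∃ i, ∀ s ∈ Icc (0 : ℝ) 1,
      kaplan (descentFlow L i s x) ^ p ≤ kaplan x ^ p - L ^ 2 * s ^ 3 / 40 := by
  have hL0 : 0 < L := by linarith
  obtain ⟨y, rfl⟩ : ∃ y, heisDilation L y = x :=
    ⟨![x 0 / L, x 1 / L, x 2 / L ^ 2], by
      ext i; fin_cases i <;> simp [heisDilation] <;> field_simp⟩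
  rw [kaplan_heisDilation hL0.le, mul_comm, mul_le_mul_iff_right₀ hL0] at hx
  obtain ⟨i, hi⟩ := exists_kaplan_descentFlow_pow_four_le hx
  refine ⟨i, fun s hs ↦ ?_⟩
  set z := descentFlow 1 i s y
  set d := s ^ 3 / 40
  have hflow : descentFlow L i s (heisDilation L y) = heisDilation L z := by
    simp [z, descentFlow, horizontalFlow_heisDilation]
  have hd0 : 0 ≤ d := by have := hs.1; positivity
  have hd1 : d ≤ 1 := by
    have : s ^ 3 ≤ 1 := pow_le_one₀ hs.1 hs.2
    simp only [d]; linarith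
  have hNy : 120 ^ 2 ≤ kaplan y ^ 2 := by gcongr
  have hsq : kaplan z ^ 2 ≤ kaplan y ^ 2 - d := by
    refine le_of_sq_le_sq ?_ (by linarith)
    have hz : kaplan z ^ 4 ≤ kaplan y ^ 4 - 2 * d * kaplan y ^ 2 :=
      (hi s hs).trans_eq (by simp only [d]; ring)
    linarith [sq_nonneg d]
  have hL2 : 1 ≤ L ^ 2 := one_le_pow₀ hL
  have hrpow (v : Spin3) : kaplan (heisDilation L v) ^ p = (L ^ 2 * kaplan v ^ 2) ^ (p / 2) := by
    rw [kaplan_heisDilation hL0.le, ← mul_pow, ← Real.rpow_natCast_mul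
      (mul_nonneg hL0.le (kaplan_nonneg v))]
    congr 1
    push_cast
    ring
  calc kaplan (descentFlow L i s (heisDilation L y)) ^ p
      = (L ^ 2 * kaplan z ^ 2) ^ (p / 2) := by rw [hflow, hrpow]
    _ ≤ (L ^ 2 * kaplan y ^ 2 - L ^ 2 * d) ^ (p / 2) := by
        rw [← mul_sub]
        gcongr
    _ ≤ (L ^ 2 * kaplan y ^ 2) ^ (p / 2) - L ^ 2 * d :=
        sub_rpow_le_rpow_sub (by nlinarith) (by positivity) (by gcongr; linarith) (by linarith)
    _ = kaplan (heisDilation L y) ^ p - L ^ 2 * s ^ 3 / 40 := by rw [hrpow]; ring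

end Descent

section UBound

variable {α p q : ℝ}

/-- The density `e^{−αN^p}` of the unnormalised Kaplan measure, with values in `ℝ≥0∞`. -/
def kaplanDensity (α p : ℝ) (x : Spin3) : ℝ≥0∞ :=
  ENNReal.ofReal (Real.exp (-(α * kaplan x ^ p)))

lemma continuous_kaplan : Continuous kaplan := by
  unfold kaplan
  exact Continuous.rpow_const (by fun_prop) fun _ ↦ Or.inr (by norm_num)

lemma continuous_kaplan_rpow (hp : 0 ≤ p) : Continuous fun x ↦ kaplan x ^ p :=
  continuous_kaplan.rpow_const fun _ ↦ Or.inr hp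

lemma continuous_kaplanDensity (hp : 0 ≤ p) : Continuous (kaplanDensity α p) := by
  have := continuous_kaplan_rpow hp
  exact ENNReal.continuous_ofReal.comp (by fun_prop)

lemma kaplanDensity_le_one (hα : 0 ≤ α) (x : Spin3) : kaplanDensity α p x ≤ 1 := by
  have : 0 ≤ α * kaplan x ^ p := mul_nonneg hα (Real.rpow_nonneg (kaplan_nonneg x) p)
  simpa [kaplanDensity]

lemma kaplanDensity_le_mul (hα : 0 ≤ α) {x y : Spin3} {d : ℝ}
    (h : kaplan y ^ p ≤ kaplan x ^ p - d) :
    kaplanDensity α p x ≤ ENNReal.ofReal (Real.exp (-(α * d))) * kaplanDensity α p y := by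
  rw [kaplanDensity, kaplanDensity, ← ENNReal.ofReal_mul (Real.exp_nonneg _), ← Real.exp_add]
  gcongr
  linarith [mul_le_mul_of_nonneg_left h hα]

lemma norm_le_one_add_kaplan_sq (x : Spin3) : ‖x‖ ≤ 1 + kaplan x ^ 2 := by
  have hN : (kaplan x ^ 2) ^ 2 = (x 0 ^ 2 + x 1 ^ 2) ^ 2 + (4 * x 2) ^ 2 := by
    rw [← pow_mul, kaplan_pow_four]
    ring
  have hhor : x 0 ^ 2 + x 1 ^ 2 ≤ kaplan x ^ 2 :=
    le_of_sq_le_sq (by linarith [sq_nonneg (4 * x 2)]) (by positivity)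
  have hver : |4 * x 2| ≤ kaplan x ^ 2 :=
    abs_le_of_sq_le_sq (by linarith [sq_nonneg (x 0 ^ 2 + x 1 ^ 2)]) (by positivity)
  have habs (a : ℝ) : |a| ≤ 1 + a ^ 2 := by
    rw [← sq_abs]
    linarith [sq_nonneg (|a| - 1), sq_nonneg |a|]
  rw [pi_norm_le_iff_of_nonneg (by positivity)]
  intro i
  fin_cases i <;> simp only [Real.norm_eq_abs]
  · exact (habs (x 0)).trans (by linarith [sq_nonneg (x 1)])
  · exact (habs (x 1)).trans (by linarith [sq_nonneg (x 0)])
  · rw [abs_mul, abs_of_pos four_pos] at hver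
    change |x 2| ≤ _
    linarith [abs_nonneg (x 2)]

lemma isCompact_kaplan_le (R : ℝ) : IsCompact {x | kaplan x ≤ R} := by
  refine Metric.isCompact_of_isClosed_isBounded (isClosed_le continuous_kaplan continuous_const) ?_
  refine isBounded_iff_forall_norm_le.2 ⟨1 + R ^ 2, fun x hx ↦ ?_⟩
  have := kaplan_nonneg x
  exact (norm_le_one_add_kaplan_sq x).trans (by gcongr; exact hx)

lemma kaplan_sq_sub_one_le_rpow (hp : 2 ≤ p) (x : Spin3) : kaplan x ^ 2 - 1 ≤ kaplan x ^ p := by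
  rcases le_total (kaplan x) 1 with h | h
  · have : kaplan x ^ 2 ≤ 1 := pow_le_one₀ (kaplan_nonneg x) h
    linarith [Real.rpow_nonneg (kaplan_nonneg x) p]
  · have := Real.rpow_le_rpow_of_exponent_le h hp
    rw [Real.rpow_two] at this
    linarith

lemma exp_neg_kaplan_rpow_le (hα : 0 < α) (hp : 2 ≤ p) (x : Spin3) :
    Real.exp (-(α * kaplan x ^ p)) ≤
      Real.exp (3 * α) * 24 / α ^ 4 * (1 + ‖x‖) ^ (-4 : ℝ) := by
  have hnorm : 0 < 1 + ‖x‖ := by positivity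
  have hexp : (α * (1 + ‖x‖)) ^ 4 / 24 ≤ Real.exp (α * (1 + ‖x‖)) := by
    simpa [Nat.factorial] using Real.pow_div_factorial_le_exp _ (by positivity) 4
  have hle : -(α * kaplan x ^ p) ≤ 3 * α - α * (1 + ‖x‖) := by
    nlinarith [kaplan_sq_sub_one_le_rpow hp x, norm_le_one_add_kaplan_sq x]
  calc Real.exp (-(α * kaplan x ^ p)) ≤ Real.exp (3 * α) / Real.exp (α * (1 + ‖x‖)) := by
        rw [← Real.exp_sub]
        gcongr
    _ ≤ Real.exp (3 * α) / ((α * (1 + ‖x‖)) ^ 4 / 24) := by gcongr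
    _ = Real.exp (3 * α) * 24 / α ^ 4 * (1 + ‖x‖) ^ (-4 : ℝ) := by
        rw [Real.rpow_neg hnorm.le, show (4 : ℝ) = (4 : ℕ) by norm_num, Real.rpow_natCast]
        field_simp

lemma integrable_exp_neg_kaplan_rpow (hα : 0 < α) (hp : 2 ≤ p) :
    Integrable fun x : Spin3 ↦ Real.exp (-(α * kaplan x ^ p)) := by
  have hdom : Integrable fun x : Spin3 ↦ (1 + ‖x‖) ^ (-4 : ℝ) :=
    integrable_one_add_norm (by simp; norm_num)
  have hN := continuous_kaplan_rpow (zero_le_two.trans hp)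
  have hcont : Continuous fun x : Spin3 ↦ Real.exp (-(α * kaplan x ^ p)) := by fun_prop
  refine (hdom.const_mul (Real.exp (3 * α) * 24 / α ^ 4)).mono'
    hcont.aestronglyMeasurable (.of_forall fun x ↦ ?_)
  rw [Real.norm_of_nonneg (Real.exp_nonneg _)]
  exact exp_neg_kaplan_rpow_le hα hp x

lemma lintegral_kaplanDensity (hα : 0 < α) (hp : 2 ≤ p) :
    ∫⁻ x, kaplanDensity α p x = ENNReal.ofReal (∫ x, Real.exp (-(α * kaplan x ^ p))) :=
  (ofReal_integral_eq_lintegral_ofReal (integrable_exp_neg_kaplan_rpow hα hp)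
    (.of_forall fun _ ↦ Real.exp_nonneg _)).symm

/-- The set of points from which the descent curve with signs `i` decreases `N^p` at the rate of
`exists_kaplan_descentFlow_rpow_le`. -/
def descentSet (p L : ℝ) (i : ℤˣ × ℤˣ × ℤˣ) : Set Spin3 :=
  {x | ∀ s ∈ Icc (0 : ℝ) 1, kaplan (descentFlow L i s x) ^ p ≤ kaplan x ^ p - L ^ 2 * s ^ 3 / 40}

lemma measurableSet_descentSet (hp : 0 ≤ p) (L : ℝ) (i : ℤˣ × ℤˣ × ℤˣ) :
    MeasurableSet (descentSet p L i) := by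
  have hN := continuous_kaplan_rpow hp
  have hflow (s : ℝ) : Continuous (descentFlow L i s) :=
    (continuous_horizontalFlow _ _).comp (Continuous.prodMk_right s)
  rw [descentSet]
  simp only [ofPred_forall]
  exact (isClosed_biInter fun s _ ↦
    isClosed_le (hN.comp (hflow s)) (hN.sub continuous_const)).measurableSet

lemma sqrt_descent_speed_le {L s : ℝ} (hL : 0 ≤ L) (hs : s ∈ Icc (0 : ℝ) 1)
    (i : ℤˣ × ℤˣ × ℤˣ) :
    √(((L • descentDir i).1 + 2 * s * (L • descentBend i).1) ^ 2 +
      ((L • descentDir i).2 + 2 * s * (L • descentBend i).2) ^ 2) ≤ 2 * L := by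
  obtain ⟨σ, τ, ε⟩ := i
  have hspeed : ((L • descentDir (σ, τ, ε)).1 + 2 * s * (L • descentBend (σ, τ, ε)).1) ^ 2 +
      ((L • descentDir (σ, τ, ε)).2 + 2 * s * (L • descentBend (σ, τ, ε)).2) ^ 2 =
        L ^ 2 * (2 + s ^ 2 / 2) := by
    simp only [descentDir, descentBend, Prod.smul_fst, Prod.smul_snd, smul_eq_mul]
    linear_combination L ^ 2 * (1 + s ^ 2 * ((ε : ℤ) : ℝ) ^ 2 / 4) *
      (sq_intCast_units σ + sq_intCast_units τ) + L ^ 2 * s ^ 2 / 2 * sq_intCast_units ε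
  refine Real.sqrt_le_iff.2 ⟨by positivity, hspeed.trans_le ?_⟩
  have hs2 : s ^ 2 ≤ 1 := pow_le_one₀ hs.1 hs.2
  calc L ^ 2 * (2 + s ^ 2 / 2) ≤ L ^ 2 * 4 := by gcongr; linarith
    _ = (2 * L) ^ 2 := by ring

lemma lintegral_enorm_rpow_mul_kaplanDensity_le_of_ne_top (hα : 0 ≤ α) (hp : 2 ≤ p) (hq : 1 ≤ q)
    {L : ℝ≥0} (hL : 1 ≤ L)
    (hδ : (2 : ℝ≥0∞) ^ q * (8 * ENNReal.ofReal (Real.exp (-(α * (L ^ 2 / 40))))) ≤ 1)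
    {f : Spin3 → ℝ} (hf : LocallyLipschitz f)
    (hfin : ∫⁻ x, ‖f x‖ₑ ^ q * kaplanDensity α p x ≠ ⊤) :
    ∫⁻ x, ‖f x‖ₑ ^ q * kaplanDensity α p x ≤
      2 * (∫⁻ x in {x | kaplan x ≤ 120 * L}, ‖f x‖ₑ ^ q * kaplanDensity α p x) +
        2 ^ q * (8 * (2 * L) ^ q) * ∫⁻ x, ‖hGrad f x‖ₑ ^ q * kaplanDensity α p x := by
  have hp0 : 0 ≤ p := zero_le_two.trans hp
  have hρ : Measurable (kaplanDensity α p) := (continuous_kaplanDensity hp0).measurable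
  have hflow (i) : MeasurePreserving (descentFlow L i 1) volume volume :=
    measurePreserving_heisMul_left _
  have hcard : Fintype.card (ℤˣ × ℤˣ × ℤˣ) = 8 := rfl
  have hcover : {x | kaplan x ≤ 120 * L}ᶜ ⊆ ⋃ i, descentSet p L i := fun x hx ↦
    mem_iUnion.2 (exists_kaplan_descentFlow_rpow_le hp (mod_cast hL) (le_of_not_ge hx))
  have hmono (i) (x) (hx : x ∈ descentSet p L i) (s : ℝ) (hs : s ∈ Icc (0 : ℝ) 1) :
      kaplanDensity α p x ≤ kaplanDensity α p (descentFlow L i s x) := by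
    have := hs.1
    simpa using kaplanDensity_le_mul (d := 0) hα ((hx s hs).trans (by gcongr; positivity))
  have henergy (i) : ∫⁻ x in descentSet p L i,
      ‖f (descentFlow L i 1 x) - f x‖ₑ ^ q * kaplanDensity α p x ≤
        (2 * L) ^ q * ∫⁻ x, ‖hGrad f x‖ₑ ^ q * kaplanDensity α p x :=
    setLIntegral_enorm_horizontalFlow_sub_rpow_mul_le (M := 2 * L) hq hf
      (fun s hs ↦ sqrt_descent_speed_le L.2 hs i) (measurableSet_descentSet hp0 L i)
      hρ hρ (hmono i)
  refine (lintegral_enorm_rpow_mul_le_of_displacement hq hf.continuous.stronglyMeasurable hρ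
    hflow (measurableSet_descentSet hp0 L) hcover (fun i x hx ↦ kaplanDensity_le_mul hα ?_)
    (by rwa [hcard]) hfin).trans ?_
  · simpa using hx 1 (by simp)
  · rw [mul_assoc]
    gcongr
    refine (Finset.sum_le_sum fun i _ ↦ henergy i).trans_eq ?_
    rw [Finset.sum_const, Finset.card_univ, hcard, nsmul_eq_mul, mul_assoc]
    rfl

lemma exists_one_le_mul_exp_neg_le_one (hα : 0 < α) (q : ℝ) : ∃ L : ℝ≥0, 1 ≤ L ∧
    (2 : ℝ≥0∞) ^ q * (8 * ENNReal.ofReal (Real.exp (-(α * (L ^ 2 / 40))))) ≤ 1 := by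
  have hexp : Tendsto (fun L : ℝ≥0 ↦ Real.exp (-(α * ((L : ℝ) ^ 2 / 40)))) atTop (nhds 0) := by
    refine Real.tendsto_exp_neg_atTop_nhds_zero.comp (.const_mul_atTop hα ?_)
    exact ((tendsto_pow_atTop two_ne_zero).comp
      (NNReal.tendsto_coe_atTop.2 tendsto_id)).atTop_div_const (by norm_num)
  have hlim := ENNReal.Tendsto.const_mul (a := 2 ^ q) (ENNReal.Tendsto.const_mul (a := 8)
    (ENNReal.tendsto_ofReal hexp) (.inr (by finiteness))) (.inr (by finiteness))
  rw [ENNReal.ofReal_zero, mul_zero, mul_zero] at hlim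
  exact ((eventually_ge_atTop 1).and (hlim.eventually_le_const one_pos)).exists

/-- This is the U-bound inequality of Hebisch and Zegarliński, localised to a compact set. -/
theorem exists_lintegral_enorm_rpow_mul_kaplanDensity_le (hα : 0 < α) (hp : 2 ≤ p) (hq : 1 ≤ q) :
    ∃ K : Set Spin3, IsCompact K ∧ ∃ C : ℝ≥0, ∀ f : Spin3 → ℝ, LocallyLipschitz f →
      ∫⁻ x, ‖f x‖ₑ ^ q * kaplanDensity α p x ≤
        2 * (∫⁻ x in K, ‖f x‖ₑ ^ q * kaplanDensity α p x) +
          C * ∫⁻ x, ‖hGrad f x‖ₑ ^ q * kaplanDensity α p x := by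
  obtain ⟨L, hL, hδ⟩ := exists_one_le_mul_exp_neg_le_one hα q
  have hq0 : 0 ≤ q := zero_le_one.trans hq
  refine ⟨_, isCompact_kaplan_le (120 * L), 2 ^ q * (8 * (2 * L) ^ q), fun f hf ↦ ?_⟩
  refine lintegral_enorm_rpow_mul_le_of_forall_truncate hf.continuous.measurable
    (continuous_kaplanDensity (by linarith)).measurable fun n ↦ ?_
  have hfin : ∫⁻ x, ‖truncate n (f x)‖ₑ ^ q * kaplanDensity α p x ≠ ⊤ := by
    refine ne_top_of_le_ne_top ?_
      (lintegral_mono (g := fun x ↦ n ^ q * kaplanDensity α p x) fun x ↦ ?_)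
    · rw [lintegral_const_mul' _ _ (by finiteness), lintegral_kaplanDensity hα hp]
      finiteness
    · beta_reduce
      gcongr
      exact enorm_truncate_le_natCast n (f x)
  refine (lintegral_enorm_rpow_mul_kaplanDensity_le_of_ne_top hα.le hp hq hL hδ
    ((lipschitzWith_truncate n).locallyLipschitz.comp hf) hfin).trans ?_
  push_cast [ENNReal.coe_rpow_of_nonneg _ hq0]
  gcongr 2 * ?_ + _ * ?_
  · gcongr
    exact enorm_truncate_le n (f _)
  · exact lintegral_hGrad_comp_le (lipschitzWith_truncate n) hf hq0 _

end UBound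

section LocalPoincare

/-- The initial velocity of the connecting curve of `g`, a horizontal curve which leads from the
origin to `g` in unit time and exists as soon as `g 0 ≠ 0`. -/
def connectingDir (g : Spin3) : ℝ × ℝ := (0, 3 * g 2 / (2 * g 0))

/-- Half the acceleration of the connecting curve of `g`. -/
def connectingBend (g : Spin3) : ℝ × ℝ := (g 0, g 1 - 3 * g 2 / (2 * g 0))

lemma horizontalCurve_connecting {g : Spin3} (hg : g 0 ≠ 0) :
    horizontalCurve (connectingDir g) (connectingBend g) 1 = g := by
  ext i
  fin_cases i <;> simp [horizontalCurve, connectingDir, connectingBend]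
  field_simp

lemma continuousOn_connecting : ContinuousOn
    (fun z : Spin3 × ℝ ↦ (connectingDir z.1, connectingBend z.1, z.2)) {z | z.1 0 ≠ 0} := by
  have hslope : ContinuousOn (fun z : Spin3 × ℝ ↦ 3 * z.1 2 / (2 * z.1 0)) {z | z.1 0 ≠ 0} :=
    .div (by fun_prop) (by fun_prop) fun z hz ↦ mul_ne_zero two_ne_zero hz
  unfold connectingDir connectingBend
  fun_prop

variable {G S : Set Spin3}

lemma exists_connecting_speed_le (hG : IsCompact G) (hG0 : ∀ g ∈ G, g 0 ≠ 0) :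
    ∃ M : ℝ≥0, ∀ g ∈ G, ∀ s ∈ Icc (0 : ℝ) 1,
      √(((connectingDir g).1 + 2 * s * (connectingBend g).1) ^ 2 +
        ((connectingDir g).2 + 2 * s * (connectingBend g).2) ^ 2) ≤ M := by
  have hspeed : Continuous fun z : (ℝ × ℝ) × (ℝ × ℝ) × ℝ ↦
      √((z.1.1 + 2 * z.2.2 * z.2.1.1) ^ 2 + (z.1.2 + 2 * z.2.2 * z.2.1.2) ^ 2) := by fun_prop
  have hcomp : IsCompact (G ×ˢ Icc (0 : ℝ) 1) := hG.prod isCompact_Icc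
  obtain ⟨M, hM⟩ := hcomp.exists_bound_of_continuousOn
    (hspeed.comp_continuousOn (continuousOn_connecting.mono fun z hz ↦ hG0 z.1 hz.1))
  exact ⟨M.toNNReal, fun g hg s hs ↦
    (le_abs_self _).trans ((hM (g, s) ⟨hg, hs⟩).trans (Real.le_coe_toNNReal M))⟩

lemma exists_pos_le_connecting {r : Spin3 → ℝ≥0∞} (hr : Continuous r) (hr0 : ∀ x, r x ≠ 0)
    (hG : IsCompact G) (hG0 : ∀ g ∈ G, g 0 ≠ 0) (hS : IsCompact S) :
    ∃ k : ℝ≥0, k ≠ 0 ∧ ∀ g ∈ G, ∀ x ∈ S, ∀ s ∈ Icc (0 : ℝ) 1,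
      k ≤ r (horizontalFlow (connectingDir g) (connectingBend g) s x) := by
  have hcomp : IsCompact ((G ×ˢ Icc (0 : ℝ) 1) ×ˢ S) := (hG.prod isCompact_Icc).prod hS
  have hcurve : ContinuousOn (fun z : Spin3 × ℝ ↦
      horizontalCurve (connectingDir z.1) (connectingBend z.1) z.2) {z | z.1 0 ≠ 0} :=
    continuous_horizontalCurve.comp_continuousOn continuousOn_connecting
  have hflow : ContinuousOn (fun z : (Spin3 × ℝ) × Spin3 ↦
      horizontalFlow (connectingDir z.1.1) (connectingBend z.1.1) z.1.2 z.2)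
        ((G ×ˢ Icc (0 : ℝ) 1) ×ˢ S) :=
    continuous_heisMul.comp_continuousOn
      ((hcurve.comp continuousOn_fst fun z hz ↦ hG0 _ hz.1.1).prodMk continuousOn_snd)
  rcases ((G ×ˢ Icc (0 : ℝ) 1) ×ˢ S).eq_empty_or_nonempty with hempty | hne
  · refine ⟨1, one_ne_zero, fun g hg x hx s hs ↦ ?_⟩
    exact absurd (mk_mem_prod (mk_mem_prod hg hs) hx) (hempty ▸ notMem_empty _)
  · obtain ⟨z, -, hz⟩ := hcomp.exists_isMinOn hne (hr.comp_continuousOn hflow)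
    obtain ⟨k, hk0, hk⟩ := ENNReal.lt_iff_exists_nnreal_btwn.1 (pos_iff_ne_zero.2 (hr0 _))
    exact ⟨k, by simpa using hk0.ne', fun g hg x hx s hs ↦
      hk.le.trans (hz (mk_mem_prod (mk_mem_prod hg hs) hx))⟩

theorem exists_setLIntegral_enorm_heisMul_sub_rpow_le {q : ℝ} (hq : 1 ≤ q) {r : Spin3 → ℝ≥0∞}
    (hr : Continuous r) (hr0 : ∀ x, r x ≠ 0) (hG : IsCompact G) (hG0 : ∀ g ∈ G, g 0 ≠ 0)
    (hS : IsCompact S) :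
    ∃ C : ℝ≥0, ∀ f : Spin3 → ℝ, LocallyLipschitz f → ∀ g ∈ G,
      ∫⁻ x in S, ‖f (heisMul g x) - f x‖ₑ ^ q ≤ C * ∫⁻ x, ‖hGrad f x‖ₑ ^ q * r x := by
  obtain ⟨M, hM⟩ := exists_connecting_speed_le hG hG0
  obtain ⟨k, hk0, hk⟩ := exists_pos_le_connecting hr hr0 hG hG0 hS
  refine ⟨M ^ q / k, fun f hf g hg ↦ ?_⟩
  have hflow := setLIntegral_enorm_horizontalFlow_sub_rpow_mul_le hq hf (hM g hg)
    hS.measurableSet (k := fun _ ↦ k) measurable_const hr.measurable (hk g hg)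
  rw [horizontalFlow, horizontalCurve_connecting (hG0 g hg),
    lintegral_mul_const' _ _ (by finiteness),
    ← ENNReal.le_div_iff_mul_le (by simp [hk0]) (by simp), ENNReal.mul_div_right_comm] at hflow
  rwa [ENNReal.coe_div hk0, ENNReal.coe_rpow_of_nonneg _ (by linarith)]

lemma heisMul_heisMul_neg (g x : Spin3) : heisMul (heisMul g x) (-x) = g := by
  ext i
  fin_cases i <;> simp [heisMul]
  ring

/-- The averaging set is a ball whose points differ from those of `S` by an element `g` with
`g 0 ≥ 1`, so that all of them can be reached from `S` along connecting curves. -/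
theorem exists_setLIntegral_enorm_sub_rpow_le {q : ℝ} (hq : 1 ≤ q) {r : Spin3 → ℝ≥0∞}
    (hr : Continuous r) (hr0 : ∀ x, r x ≠ 0) (hS : IsCompact S) :
    ∃ C : ℝ≥0, ∀ f : Spin3 → ℝ, LocallyLipschitz f → ∃ c : ℝ,
      ∫⁻ x in S, ‖f x - c‖ₑ ^ q ≤ C * ∫⁻ x, ‖hGrad f x‖ₑ ^ q * r x := by
  obtain ⟨R, hR⟩ := hS.isBounded.exists_norm_le
  set K := Metric.closedBall (![R + 2, 0, 0] : Spin3) 1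
  have hK : IsCompact K := isCompact_closedBall _ _
  have hK0 : volume K ≠ 0 := (Metric.measure_closedBall_pos volume _ one_pos).ne'
  set G := (fun z : Spin3 × Spin3 ↦ heisMul z.1 (-z.2)) '' K ×ˢ S
  have hG : IsCompact G := (hK.prod hS).image
    (continuous_heisMul.comp (continuous_fst.prodMk continuous_snd.neg))
  have hBKG (x) (hx : x ∈ S) (g) (hg : heisMul g x ∈ K) : g ∈ G :=
    ⟨(heisMul g x, x), ⟨hg, hx⟩, heisMul_heisMul_neg g x⟩
  have hG0 : ∀ g ∈ G, g 0 ≠ 0 := by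
    rintro _ ⟨⟨y, x⟩, ⟨hy, hx⟩, rfl⟩
    have hy0 := (norm_le_pi_norm _ 0).trans (mem_closedBall_iff_norm.1 hy)
    have hx0 := (norm_le_pi_norm x 0).trans (hR x hx)
    simp only [Pi.sub_apply, Matrix.cons_val_zero, Real.norm_eq_abs, abs_le] at hx0 hy0
    refine ne_of_gt ?_
    simp only [heisMul, Matrix.cons_val_zero, Pi.neg_apply]
    linarith
  obtain ⟨C, hC⟩ := exists_setLIntegral_enorm_heisMul_sub_rpow_le hq hr hr0 hG hG0 hS
  refine ⟨C * (volume G / volume K).toNNReal, fun f hf ↦ ?_⟩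
  obtain ⟨y, -, hy⟩ := exists_lintegral_le_of_forall_lintegral_mul_le
    (H := fun x y ↦ ‖f y - f x‖ₑ ^ q) continuous_heisMul.measurable
    measurePreserving_heisMul_right hS.measurableSet hK.measurableSet hG.measurableSet hBKG hK0
    hK.measure_ne_top (by have := hf.continuous; fun_prop) (hC f hf)
  refine ⟨f y, ?_⟩
  rw [ENNReal.coe_mul, ENNReal.coe_toNNReal (ENNReal.div_ne_top hG.measure_ne_top hK0),
    mul_right_comm, ← mul_div_assoc]
  simpa only [enorm_sub_rev] using hy

end LocalPoincare

section SpectralGap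

variable {α p q Z : ℝ}

lemma kaplanDensity_ne_zero (α p : ℝ) (x : Spin3) : kaplanDensity α p x ≠ 0 :=
  (ENNReal.ofReal_pos.2 (Real.exp_pos _)).ne'

lemma hGrad_sub_const (f : Spin3 → ℝ) (c : ℝ) : hGrad (fun x ↦ f x - c) = hGrad f := by
  ext x
  simp [hGrad, X1, X2, fderiv_sub_const]

theorem exists_lintegral_enorm_sub_rpow_mul_kaplanDensity_le (hα : 0 < α) (hp : 2 ≤ p)
    (hq : 1 ≤ q) :
    ∃ C : ℝ≥0, ∀ f : Spin3 → ℝ, LocallyLipschitz f → ∃ c : ℝ,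
      ∫⁻ x, ‖f x - c‖ₑ ^ q * kaplanDensity α p x ≤
        C * ∫⁻ x, ‖hGrad f x‖ₑ ^ q * kaplanDensity α p x := by
  obtain ⟨K, hK, C₁, hC₁⟩ := exists_lintegral_enorm_rpow_mul_kaplanDensity_le hα hp hq
  obtain ⟨C₂, hC₂⟩ := exists_setLIntegral_enorm_sub_rpow_le hq
    (continuous_kaplanDensity (α := α) (zero_le_two.trans hp)) (kaplanDensity_ne_zero α p) hK
  refine ⟨2 * C₂ + C₁, fun f hf ↦ ?_⟩
  obtain ⟨c, hc⟩ := hC₂ f hf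
  refine ⟨c, ?_⟩
  calc ∫⁻ x, ‖f x - c‖ₑ ^ q * kaplanDensity α p x
      ≤ 2 * (∫⁻ x in K, ‖f x - c‖ₑ ^ q * kaplanDensity α p x) +
          C₁ * ∫⁻ x, ‖hGrad (fun x ↦ f x - c) x‖ₑ ^ q * kaplanDensity α p x :=
        hC₁ _ (hf.sub (.const c))
    _ ≤ 2 * (∫⁻ x in K, ‖f x - c‖ₑ ^ q) +
          C₁ * ∫⁻ x, ‖hGrad f x‖ₑ ^ q * kaplanDensity α p x := by
        rw [hGrad_sub_const]
        gcongr
        exact mul_le_of_le_one_right' (kaplanDensity_le_one hα.le _)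
    _ ≤ 2 * (C₂ * ∫⁻ x, ‖hGrad f x‖ₑ ^ q * kaplanDensity α p x) +
          C₁ * ∫⁻ x, ‖hGrad f x‖ₑ ^ q * kaplanDensity α p x := by gcongr
    _ = ↑(2 * C₂ + C₁) * ∫⁻ x, ‖hGrad f x‖ₑ ^ q * kaplanDensity α p x := by
        push_cast
        ring

lemma lintegral_nuKaplan (hp : 0 ≤ p) {F : Spin3 → ℝ≥0∞} (hF : Measurable F) :
    ∫⁻ x, F x ∂nuKaplan α p Z = (ENNReal.ofReal Z)⁻¹ * ∫⁻ x, F x * kaplanDensity α p x := by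
  change ∫⁻ x, F x ∂(ENNReal.ofReal Z)⁻¹ • volume.withDensity (kaplanDensity α p) = _
  rw [lintegral_smul_measure, smul_eq_mul,
    lintegral_withDensity_eq_lintegral_mul _ (continuous_kaplanDensity hp).measurable hF]
  simp only [Pi.mul_apply, mul_comm]

lemma isProbabilityMeasure_nuKaplan (hα : 0 < α) (hp : 2 ≤ p)
    (hZ : Z = ∫ x : Spin3, Real.exp (-(α * kaplan x ^ p))) :
    IsProbabilityMeasure (nuKaplan α p Z) := by
  have hZ0 : 0 < Z := hZ ▸ integral_exp_pos (integrable_exp_neg_kaplan_rpow hα hp)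
  constructor
  rw [← lintegral_one, lintegral_nuKaplan (by linarith) measurable_const]
  simp only [one_mul]
  rw [lintegral_kaplanDensity hα hp, ← hZ]
  exact ENNReal.inv_mul_cancel (by simpa) (by simp)

theorem exists_lintegral_enorm_sub_integral_rpow_nuKaplan_le (hα : 0 < α) (hp : 2 ≤ p)
    (hq : 1 ≤ q) (hZ : Z = ∫ x : Spin3, Real.exp (-(α * kaplan x ^ p))) :
    ∃ C : ℝ≥0, ∀ f : Spin3 → ℝ, LocallyLipschitz f →
      ∫⁻ x, ‖f x - ∫ y, f y ∂nuKaplan α p Z‖ₑ ^ q ∂nuKaplan α p Z ≤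
        C * ∫⁻ x, ‖hGrad f x‖ₑ ^ q ∂nuKaplan α p Z := by
  have := isProbabilityMeasure_nuKaplan hα hp hZ
  have hp0 : 0 ≤ p := zero_le_two.trans hp
  obtain ⟨C, hC⟩ := exists_lintegral_enorm_sub_rpow_mul_kaplanDensity_le hα hp hq
  refine ⟨2 ^ q * C, fun f hf ↦ ?_⟩
  obtain ⟨c, hc⟩ := hC f hf
  have hcont := hf.continuous
  have hgrad := measurable_hGrad f
  calc ∫⁻ x, ‖f x - ∫ y, f y ∂nuKaplan α p Z‖ₑ ^ q ∂nuKaplan α p Z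
      ≤ 2 ^ q * ∫⁻ x, ‖f x - c‖ₑ ^ q ∂nuKaplan α p Z :=
        lintegral_enorm_sub_integral_rpow_le _ hq hcont.aestronglyMeasurable c
    _ = 2 ^ q * ((ENNReal.ofReal Z)⁻¹ * ∫⁻ x, ‖f x - c‖ₑ ^ q * kaplanDensity α p x) := by
        rw [lintegral_nuKaplan hp0 (by fun_prop)]
    _ ≤ 2 ^ q * ((ENNReal.ofReal Z)⁻¹ *
          (C * ∫⁻ x, ‖hGrad f x‖ₑ ^ q * kaplanDensity α p x)) := by gcongr
    _ = ↑(2 ^ q * C) * ∫⁻ x, ‖hGrad f x‖ₑ ^ q ∂nuKaplan α p Z := by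
        rw [lintegral_nuKaplan hp0 (by fun_prop), ENNReal.coe_mul,
          ENNReal.coe_rpow_of_nonneg _ (by linarith), ENNReal.coe_ofNat]
        ring

lemma ofReal_abs_rpow (hq : 0 ≤ q) (y : ℝ) : ENNReal.ofReal (|y| ^ q) = ‖y‖ₑ ^ q := by
  rw [← ENNReal.ofReal_rpow_of_nonneg (abs_nonneg y) hq, Real.enorm_eq_ofReal_abs]

theorem kaplan_q_spectral_gap_general (q p α Z : ℝ) (hq : 1 ≤ q) (hp : 2 ≤ p) (hα : 0 < α)
    (hZ : Z = ∫ x : Spin3, Real.exp (-(α * kaplan x ^ p))) :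
    ∃ C : ℝ, 0 < C ∧
      ∀ f : Spin3 → ℝ, LocallyLipschitz f →
        ∫⁻ x, ENNReal.ofReal (|f x - ∫ y, f y ∂(nuKaplan α p Z)| ^ q) ∂(nuKaplan α p Z) ≤
          ENNReal.ofReal C * ∫⁻ x, ENNReal.ofReal (hGrad f x ^ q) ∂(nuKaplan α p Z) := by
  obtain ⟨C, hC⟩ := exists_lintegral_enorm_sub_integral_rpow_nuKaplan_le hα hp hq hZ
  refine ⟨C + 1, by positivity, fun f hf ↦ ?_⟩
  have hgrad (x : Spin3) : ENNReal.ofReal (hGrad f x ^ q) = ‖hGrad f x‖ₑ ^ q := by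
    rw [← ofReal_abs_rpow (zero_le_one.trans hq), abs_of_nonneg (hGrad_nonneg f x)]
  simp only [hgrad, ofReal_abs_rpow (zero_le_one.trans hq)]
  refine (hC f hf).trans ?_
  gcongr
  rw [← ENNReal.ofReal_coe_nnreal]
  exact ENNReal.ofReal_le_ofReal (by linarith)

end SpectralGap

/-- **q-spectral gap inequality for the Kaplan measure.** For `q ∈ (1,2]`,
`p = q/(q−1)` and `α > 0`, the measure `dν = Z⁻¹e^{−αN^p}dx` satisfies
`∫ |f − ∫ f dν|^q dν ≤ C ∫ |∇f|^q dν` for all locally Lipschitz `f` with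
`∫ |∇f|^q dν < ∞`. -/
theorem kaplan_q_spectral_gap (q p α Z : ℝ) (hq1 : 1 < q) (hq2 : q ≤ 2)
    (hp : p = q / (q - 1)) (hα : 0 < α)
    (hZ : Z = ∫ x : Spin3, Real.exp (-(α * kaplan x ^ p)))
    (hZpos : 0 < Z)
    (hZint : Integrable fun x : Spin3 => Real.exp (-(α * kaplan x ^ p))) :
    ∃ C : ℝ, 0 < C ∧
      ∀ f : Spin3 → ℝ, LocallyLipschitz f →
        (∫⁻ x, ENNReal.ofReal (hGrad f x ^ q) ∂(nuKaplan α p Z)) ≠ ⊤ →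
        ∫⁻ x, ENNReal.ofReal (|f x - ∫ y, f y ∂(nuKaplan α p Z)| ^ q) ∂(nuKaplan α p Z) ≤
          ENNReal.ofReal C * ∫⁻ x, ENNReal.ofReal (hGrad f x ^ q) ∂(nuKaplan α p Z) := by
  have hp2 : 2 ≤ p := by rw [hp, le_div_iff₀ (by linarith)]; linarith
  obtain ⟨C, hC0, hC⟩ := kaplan_q_spectral_gap_general q p α Z hq1.le hp2 hα hZ
  exact ⟨C, hC0, fun f hf _ ↦ hC f hf⟩
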